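/- arXiv:1104.2705 — 3 statements merged into one kernel-verified Lean document; each statement's English description precedes it below -/
import Mathlib

section
/- Let n ≥ 1 and x, y ∈ ℍⁿ. Then the commutator X(x)·X(y) − X(y)·X(x) equals P(p), where p := Σ_{a=1}^{n} (x_a·conj(y_a) − y_a·conj(x_a)); in particular p is purely imaginary, so the bracket of two such degree −1 matrices is a degree −2 matrix. -/
open Quaternion Matrix

noncomputable section

def iq : ℍ[ℝ] := ⟨0,1,0,0⟩
def jq : ℍ[ℝ] := ⟨0,0,1,0⟩
def kq : ℍ[ℝ] := ⟨0,0,0,1⟩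

/-- The `ℂ`-part `u` in the decomposition `q = u + j·v`. -/
def Qc (q : ℍ[ℝ]) : ℂ := ⟨q.re, q.imI⟩

/-- The `ℂ`-part `v` in the decomposition `q = u + j·v`. -/
def Qj (q : ℍ[ℝ]) : ℂ := ⟨q.imJ, -q.imK⟩

/-- Embedding of `ℂ` into the quaternions. -/
def toH (u : ℂ) : ℍ[ℝ] := ⟨u.re, u.im, 0, 0⟩

/-- `φ : M_m(ℍ) → M_{2m}(ℂ)`, `U + jV ↦ [[U, -conj V],[V, conj U]]`. -/
def phi (m : ℕ) (M : Matrix (Fin m) (Fin m) ℍ[ℝ]) :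
    Matrix (Fin m ⊕ Fin m) (Fin m ⊕ Fin m) ℂ :=
  Matrix.fromBlocks (M.map Qc) (-((M.map Qj).map (starRingEnd ℂ)))
    (M.map Qj) ((M.map Qc).map (starRingEnd ℂ))

/-- The index `a + 1` of `Fin (n+2)`, for `a : Fin n` (the "middle" indices `1,…,n`). -/
def mid {n : ℕ} (a : Fin n) : Fin (n+2) := ⟨a.val + 1, by omega⟩

def JQ (n : ℕ) : Matrix (Fin (n+2)) (Fin (n+2)) ℍ[ℝ] :=
  fun r c =>
    if (r = 0 ∧ c = Fin.last (n+1)) ∨ (r = Fin.last (n+1) ∧ c = 0)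
      ∨ (r = c ∧ r ≠ 0 ∧ r ≠ Fin.last (n+1)) then 1 else 0

def JC (n : ℕ) : Matrix (Fin (n+2)) (Fin (n+2)) ℂ :=
  fun r c =>
    if (r = 0 ∧ c = Fin.last (n+1)) ∨ (r = Fin.last (n+1) ∧ c = 0)
      ∨ (r = c ∧ r ≠ 0 ∧ r ≠ Fin.last (n+1)) then 1 else 0

def Jt (n : ℕ) : Matrix (Fin (n+2) ⊕ Fin (n+2)) (Fin (n+2) ⊕ Fin (n+2)) ℂ :=
  Matrix.fromBlocks (JC n) 0 0 (JC n)

/-- Extend a vector indexed by `1,…,n` by zero to an index `0,…,n+1`. -/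
def extC (n : ℕ) (y : Fin n → ℂ) : Fin (n+2) → ℂ :=
  fun r => if h : 1 ≤ r.val ∧ r.val ≤ n then y ⟨r.val - 1, by omega⟩ else 0

def extH (n : ℕ) (x : Fin n → ℍ[ℝ]) : Fin (n+2) → ℍ[ℝ] :=
  fun r => if h : 1 ≤ r.val ∧ r.val ≤ n then x ⟨r.val - 1, by omega⟩ else 0

/-- The degree `-1` matrix `X(x)`, `X(x)_{a,0} = conj x_a`, `X(x)_{n+1,a} = -x_a`. -/
def Xm (n : ℕ) (x : Fin n → ℍ[ℝ]) : Matrix (Fin (n+2)) (Fin (n+2)) ℍ[ℝ] :=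
  fun r c =>
    if c = 0 then extH n (fun a => star (x a)) r
    else if r = Fin.last (n+1) then -(extH n x c) else 0

/-- The degree `-2` matrix `P(p)`, whose only nonzero entry is `P(p)_{n+1,0} = -p`. -/
def Pm (n : ℕ) (p : ℍ[ℝ]) : Matrix (Fin (n+2)) (Fin (n+2)) ℍ[ℝ] :=
  fun r c => if r = Fin.last (n+1) ∧ c = 0 then -p else 0

/-- The block-diagonal matrix `diag(s·z, A, s⁻¹·z)`. -/
def gD (n : ℕ) (s : ℝ) (z : ℍ[ℝ]) (A : Matrix (Fin n) (Fin n) ℍ[ℝ]) :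
    Matrix (Fin (n+2)) (Fin (n+2)) ℍ[ℝ] :=
  fun r c =>
    if r = 0 ∧ c = 0 then (s : ℍ[ℝ]) * z
    else if r = Fin.last (n+1) ∧ c = Fin.last (n+1) then ((s⁻¹ : ℝ) : ℍ[ℝ]) * z
    else if h : (1 ≤ r.val ∧ r.val ≤ n) ∧ (1 ≤ c.val ∧ c.val ≤ n) then
      A ⟨r.val - 1, by omega⟩ ⟨c.val - 1, by omega⟩
    else 0

/- Each `X(x)` is a difference of two rank-one matrices, `X(x) = x̄ e₀ᵀ - eₙ₊₁ xᵀ`, with `x`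
extended by zero to the indices `0` and `n + 1`. Of the four products of rank-one matrices in
`X(x) X(y)` only `-(eₙ₊₁ xᵀ)(ȳ e₀ᵀ)` survives, so `X(x) X(y) = P(w)` with `w = ∑ x_a ȳ_a`.
Interchanging `x` and `y` conjugates `w`, so the bracket is `P(w - w̄)`, and `w - w̄` is purely
imaginary. -/

section RankOne

variable {m R : Type*} [Fintype m] [DecidableEq m] [Ring R]

theorem vecMulVec_sub_mul_vecMulVec_sub_eq_single {i j : m} (hij : i ≠ j) {u u' v v' : m → R}
    (hu' : u' i = 0) (hv : v j = 0) :
    (vecMulVec u (Pi.single i 1) - vecMulVec (Pi.single j 1) v) *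
        (vecMulVec u' (Pi.single i 1) - vecMulVec (Pi.single j 1) v') =
      single j i (-(v ⬝ᵥ u')) := by
  have column_mul_column :
      vecMulVec u (Pi.single i 1) * vecMulVec u' (Pi.single i 1) = 0 := by
    simp [vecMulVec_mul_vecMulVec, hu']
  have column_mul_row :
      vecMulVec u (Pi.single i 1) * vecMulVec (Pi.single j 1) v' = 0 := by
    simp [vecMulVec_mul_vecMulVec, hij]
  have row_mul_row :
      vecMulVec (Pi.single j 1) v * vecMulVec (Pi.single j 1) v' = 0 := by
    simp [vecMulVec_mul_vecMulVec, hv]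
  have row_mul_column :
      vecMulVec (Pi.single j 1) v * vecMulVec u' (Pi.single i 1) = single j i (v ⬝ᵥ u') := by
    ext r c
    simp [vecMulVec_mul_vecMulVec, vecMulVec_apply, single_apply, Pi.single_apply, ← ite_and,
      and_comm, eq_comm]
  rw [sub_mul, mul_sub, mul_sub, column_mul_column, column_mul_row, row_mul_row, row_mul_column,
    sub_zero, sub_zero, zero_sub, single_neg]

end RankOne

theorem re_sub_star {R : Type*} [CommRing R] (q : ℍ[R]) : (q - star q).re = 0 := by
  rw [re_sub, re_star, sub_self]

section NegativeDegree

variable {n : ℕ}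

theorem extH_zero (x : Fin n → ℍ[ℝ]) : extH n x 0 = 0 := by
  simp [extH]

theorem extH_last (x : Fin n → ℍ[ℝ]) : extH n x (Fin.last (n + 1)) = 0 := by
  simp [extH]

theorem extH_castSucc_succ (x : Fin n → ℍ[ℝ]) (a : Fin n) : extH n x a.castSucc.succ = x a := by
  simp [extH]

theorem extH_dotProduct_extH (x z : Fin n → ℍ[ℝ]) : extH n x ⬝ᵥ extH n z = x ⬝ᵥ z := by
  rw [dotProduct, Fin.sum_univ_succ, Fin.sum_univ_castSucc]
  simp only [Fin.succ_last, extH_zero, extH_last, extH_castSucc_succ, mul_zero, zero_add, add_zero,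
    dotProduct]

theorem Xm_eq_vecMulVec_sub (x : Fin n → ℍ[ℝ]) :
    Xm n x = vecMulVec (extH n (star x)) (Pi.single 0 1) -
      vecMulVec (Pi.single (Fin.last (n + 1)) 1) (extH n x) := by
  ext1 r c
  by_cases hc : c = 0 <;> by_cases hr : r = Fin.last (n + 1) <;>
    simp [Xm, vecMulVec_apply, hc, hr, extH_zero, Pi.star_def]

theorem Pm_eq_single (p : ℍ[ℝ]) : Pm n p = single (Fin.last (n + 1)) 0 (-p) := by
  ext1 r c
  simp only [Pm, single_apply, eq_comm]

theorem Pm_sub (p q : ℍ[ℝ]) : Pm n (p - q) = Pm n p - Pm n q := by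
  simp only [Pm_eq_single, sub_eq_add_neg, neg_add, single_add, single_neg]

theorem Xm_mul_Xm (x y : Fin n → ℍ[ℝ]) : Xm n x * Xm n y = Pm n (x ⬝ᵥ star y) := by
  rw [Xm_eq_vecMulVec_sub, Xm_eq_vecMulVec_sub,
    vecMulVec_sub_mul_vecMulVec_sub_eq_single Fin.last_pos.ne (extH_zero _) (extH_last _),
    extH_dotProduct_extH, Pm_eq_single]

end NegativeDegree

/-- the bracket of two degree `-1` matrices is a degree `-2` matrix:
`[X(x), X(y)] = P(p)` with `p = Σ (x_a·conj y_a − y_a·conj x_a)` purely imaginary. -/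
theorem stmt6 (n : ℕ) (hn : 1 ≤ n) (x y : Fin n → ℍ[ℝ]) :
    Xm n x * Xm n y - Xm n y * Xm n x =
      Pm n (∑ a : Fin n, (x a * star (y a) - y a * star (x a))) ∧
    (∑ a : Fin n, (x a * star (y a) - y a * star (x a))).re = 0 := by
  have sum_eq : ∑ a : Fin n, (x a * star (y a) - y a * star (x a)) =
      x ⬝ᵥ star y - y ⬝ᵥ star x := Finset.sum_sub_distrib _ _
  rw [sum_eq]
  constructor
  · rw [Xm_mul_Xm, Xm_mul_Xm, Pm_sub]
  · rw [dotProduct_star y x]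
    exact re_sub_star _
end
end

section
/- Let n ≥ 1, s > 0 a real number, z ∈ ℍ a unit quaternion, A ∈ M_n(ℍ) with Aᴴ·A = 1, and g := diag(s·z, A, s⁻¹·z) ∈ M_{n+2}(ℍ). Then for every x ∈ ℍⁿ, g·X(x)·g⁻¹ = X(x′), where x′ ∈ ℍⁿ is determined by conj(x′_a) = s⁻¹·(Σ_{b=1}^{n} A_{a,b}·conj(x_b))·conj(z) for each 1 ≤ a ≤ n. -/
open Quaternion Matrix

noncomputable section

/-!
Splitting the indices as `{0} ⊔ {1,…,n} ⊔ {n+1}` turns `g` into the block diagonal matrix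
`diag(P, A, Rᴴ)`, `g⁻¹` into `diag(R, Aᴴ, T)`, and `X` into the matrix with the two blocks `Y` and
`-Yᴴ` below the diagonal, where `Y` is the column with entries `conj(x_a)` and `R = s⁻¹ * conj(z)`.
The blocks of `g * X * g⁻¹` are then `A * Y * R` and `-(Rᴴ * Yᴴ * Aᴴ) = -(A * Y * R)ᴴ`, so it has
the same shape as `X`, with column `A * Y * R`.
-/

section Block

variable {κ κ' ι ι' α : Type*}

/-- The three-block diagonal matrix `diag(P, A, Q)`, the block form of `diag(s·z, A, s⁻¹·z)`. The
blocks may be rectangular. -/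
def diagBlocks [Zero α] (P : Matrix κ' κ α) (A : Matrix ι' ι α) (Q : Matrix κ' κ α) :
    Matrix (κ' ⊕ ι' ⊕ κ') (κ ⊕ ι ⊕ κ) α :=
  fromBlocks P 0 0 (fromBlocks A 0 0 Q)

/-- The block form of the degree `-1` matrices `X(x)`: the blocks just below the diagonal are `Y`
and `-Yᴴ`, and all others vanish. For `X(x)` the block `Y` is the column of the `conj(x_a)`, not of
the `x_a`. -/
def subdiagBlocks [Zero α] [Neg α] [Star α] (Y : Matrix ι κ α) :
    Matrix (κ ⊕ ι ⊕ κ) (κ ⊕ ι ⊕ κ) α :=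
  fromBlocks 0 0 (fromRows Y 0) (fromBlocks 0 0 (-Yᴴ) 0)

variable [Fintype κ] [Fintype ι]

theorem stmt8_general [Ring α] [StarRing α] (P : Matrix κ' κ α) (A : Matrix ι' ι α)
    (R T : Matrix κ κ' α) (Y : Matrix ι κ α) :
    diagBlocks P A Rᴴ * subdiagBlocks Y * diagBlocks R Aᴴ T = subdiagBlocks (A * Y * R) := by
  simp [diagBlocks, subdiagBlocks, fromBlocks_multiply, fromBlocks_mul_fromRows, fromRows_mul,
    conjTranspose_mul, Matrix.mul_assoc]

theorem mul_replicateCol_mul_diagonal [NonUnitalNonAssocSemiring α] [DecidableEq κ]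
    (A : Matrix ι' ι α) (v : ι → α) (r : α) :
    A * replicateCol κ v * diagonal (fun _ : κ => r) = replicateCol κ fun a => (A *ᵥ v) a * r := by
  ext1 a k
  rw [← replicateCol_mulVec, mul_diagonal, replicateCol_apply, replicateCol_apply]

end Block

section Coordinates

variable {n : ℕ}

/-- The splitting of the indices `0,…,n+1` into the first, the middle and the last one, which
carries block matrices to matrices indexed by `Fin (n + 2)`. -/
def indexEquiv (n : ℕ) : Unit ⊕ Fin n ⊕ Unit ≃ Fin (n + 2) :=
  Equiv.ofBijective (Sum.elim (fun _ => 0) (Sum.elim mid fun _ => Fin.last (n + 1))) <| by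
    refine (Fintype.bijective_iff_surjective_and_card _).2 ⟨fun r => ?_, by simp; omega⟩
    induction r using Fin.cases with
    | zero => exact ⟨.inl (), rfl⟩
    | succ r =>
      induction r using Fin.lastCases with
      | last => exact ⟨.inr (.inr ()), rfl⟩
      | cast a => exact ⟨.inr (.inl a), rfl⟩

-- The last corner `s⁻¹·z` is written as `Rᴴ` with `R = s⁻¹·conj(z)`, as `stmt8_general` requires.
theorem gD_eq_reindex_diagBlocks (s : ℝ) (z : ℍ[ℝ]) (A : Matrix (Fin n) (Fin n) ℍ[ℝ]) :
    gD n s z A = reindex (indexEquiv n) (indexEquiv n)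
      (diagBlocks (diagonal fun _ => ↑s * z) A (diagonal fun _ => ↑s⁻¹ * star z)ᴴ) := by
  rw [← Equiv.symm_apply_eq]
  ext1 (_ | a | _) (_ | b | _) <;>
    simp [gD, diagBlocks, indexEquiv, mid, Fin.ext_iff, fun i : Fin n => i.isLt.ne,
      diagonal_conjTranspose, -Quaternion.coe_inv, Quaternion.coe_commutes]

theorem Xm_eq_reindex_subdiagBlocks (x : Fin n → ℍ[ℝ]) :
    Xm n x = reindex (indexEquiv n) (indexEquiv n)
      (subdiagBlocks (replicateCol Unit (star x))) := by
  rw [← Equiv.symm_apply_eq]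
  ext1 (_ | a | _) (_ | b | _) <;>
    simp [Xm, extH, subdiagBlocks, indexEquiv, mid, Fin.ext_iff, fun i : Fin n => i.isLt.ne]

end Coordinates

/-- `g·X(x)·g⁻¹ = X(x′)` where `conj(x′_a) = s⁻¹·(Σ_b A_{a,b}·conj(x_b))·conj(z)`. -/
theorem stmt8 (n : ℕ) (hn : 1 ≤ n) (s : ℝ) (hs : 0 < s) (z : ℍ[ℝ]) (hz : ‖z‖ = 1)
    (A : Matrix (Fin n) (Fin n) ℍ[ℝ]) (hA : Aᴴ * A = 1) (x : Fin n → ℍ[ℝ]) :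
    ∀ x' : Fin n → ℍ[ℝ],
      (∀ a : Fin n, star (x' a) =
        ((s⁻¹ : ℝ) : ℍ[ℝ]) * (∑ b : Fin n, A a b * star (x b)) * star z) →
      gD n s z A * Xm n x * gD n s⁻¹ (star z) Aᴴ = Xm n x' := by
  intro x' hx'
  have hcol : star x' = fun a => (A *ᵥ star x) a * (↑s⁻¹ * star z) :=
    funext fun a => (hx' a).trans (by rw [Quaternion.coe_commutes, mul_assoc]; rfl)
  simp only [gD_eq_reindex_diagBlocks, Xm_eq_reindex_subdiagBlocks, reindex_apply,
    submatrix_mul_equiv, stmt8_general, mul_replicateCol_mul_diagonal, hcol]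
end
end

section
/- Let n ≥ 1 and x ∈ ℍⁿ, and let i·x ∈ ℍⁿ denote entrywise left multiplication by the quaternion unit i. Then the 0-th column of φ(X(i·x)) equals (−i) times the 0-th column of φ(X(x)) (scalar multiplication in ℂ^{2n+4}); i.e., the degree −1 component map M ↦ (0-th column of φ(M)) intertwines left multiplication by i on x with multiplication by −i. -/
open Quaternion Matrix

noncomputable section

/-!
The `0`-th column of `X(x)` consists of the conjugates of the entries of `x` and zeros, so replacing
`x` by `q x` multiplies this column by `star q` on the right. For `w ∈ ℂ` we have
`(a + j b) w = a w + j (b w)`, so `φ` turns right multiplication of a column by `w` into scalar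
multiplication by `w`. For `q = u ∈ ℂ` the factor is `conj u`, and `conj i = -i`.
-/

theorem toH_eq_coeComplex (u : ℂ) : toH u = (u : ℍ[ℝ]) := rfl

theorem toH_I : toH Complex.I = iq := rfl

theorem star_toH (u : ℂ) : star (toH u) = toH (starRingEnd ℂ u) := by
  ext <;> simp [toH_eq_coeComplex]

theorem Qc_mul_toH (q : ℍ[ℝ]) (w : ℂ) : Qc (q * toH w) = Qc q * w := by
  apply Complex.ext <;> simp [Qc, toH_eq_coeComplex]

theorem Qj_mul_toH (q : ℍ[ℝ]) (w : ℂ) : Qj (q * toH w) = Qj q * w := by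
  apply Complex.ext <;> simp [Qj, toH_eq_coeComplex, sub_eq_add_neg, add_comm]

theorem phi_apply_inl_of_col_eq_mul_toH {m : ℕ} {M N : Matrix (Fin m) (Fin m) ℍ[ℝ]} {c : Fin m}
    {w : ℂ} (h : ∀ r, N r c = M r c * toH w) (r : Fin m ⊕ Fin m) :
    phi m N r (Sum.inl c) = w * phi m M r (Sum.inl c) := by
  rcases r with r | r
  · calc
      Qc (N r c) = Qc (M r c) * w := by rw [h, Qc_mul_toH]
      _ = w * Qc (M r c) := mul_comm _ _
  · calc
      Qj (N r c) = Qj (M r c) * w := by rw [h, Qj_mul_toH]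
      _ = w * Qj (M r c) := mul_comm _ _

theorem extH_mul_const {n : ℕ} (y : Fin n → ℍ[ℝ]) (q : ℍ[ℝ]) (r : Fin (n + 2)) :
    extH n (fun a => y a * q) r = extH n y r * q := by
  simp only [extH, dite_mul, zero_mul]

theorem Xm_mul_left_apply_zero {n : ℕ} (q : ℍ[ℝ]) (x : Fin n → ℍ[ℝ]) (r : Fin (n + 2)) :
    Xm n (fun a => q * x a) r 0 = Xm n x r 0 * star q := by
  simp only [Xm, if_true, star_mul, extH_mul_const]

theorem stmt13_general (n : ℕ) (u : ℂ) (x : Fin n → ℍ[ℝ]) (r : Fin (n + 2) ⊕ Fin (n + 2)) :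
    phi (n + 2) (Xm n (fun a => toH u * x a)) r (Sum.inl 0) =
      starRingEnd ℂ u * phi (n + 2) (Xm n x) r (Sum.inl 0) :=
  phi_apply_inl_of_col_eq_mul_toH (fun s => by rw [Xm_mul_left_apply_zero, star_toH]) r

/-- the degree `-1` component map `M ↦ (0-th column of φ(M))`
intertwines left multiplication by `i` on `x` with multiplication by `−i`. -/
theorem stmt13 (n : ℕ) (hn : 1 ≤ n) (x : Fin n → ℍ[ℝ]) :
    ∀ r : Fin (n+2) ⊕ Fin (n+2),
      phi (n+2) (Xm n (fun a => iq * x a)) r (Sum.inl 0) =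
        (-Complex.I) * phi (n+2) (Xm n x) r (Sum.inl 0) := by
  intro r
  rw [← toH_I, stmt13_general, Complex.conj_I]
end
end
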